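/- arXiv:2206.15287 — 2 statements merged into one kernel-verified Lean document; each statement's English description precedes it below -/
import Mathlib

section
/- Let (m, α, μ) and (n, β, ν) be classical systems both satisfying detailed balance (μ_p α_{pq} = μ_q α_{qp} for all p,q, and ν_r β_{rs} = ν_s β_{sr} for all r,s), and let ω be a coupling of μ and ν. Then ω is a transport plan from (m, α, μ) to (n, β, ν) if and only if its transpose ωᵀ (defined by ωᵀ_{rp} = ω_{pr}) is a transport plan from (n, β, ν) to (m, α, μ). -/
/-- A classical system: a row-stochastic matrix α with strictly positive invariant
probability vector μ. -/
def IsClassicalSystem {m : ℕ} (α : Fin m → Fin m → ℝ) (μ : Fin m → ℝ) : Prop :=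
  (∀ p q, 0 ≤ α p q) ∧ (∀ p, ∑ q, α p q = 1) ∧
  (∀ p, 0 < μ p) ∧ (∑ p, μ p = 1) ∧ (∀ q, ∑ p, μ p * α p q = μ q)

/-- A coupling of the probability vectors μ and ν. -/
def IsCoupling {m n : ℕ} (μ : Fin m → ℝ) (ν : Fin n → ℝ) (ω : Fin m → Fin n → ℝ) : Prop :=
  (∀ p r, 0 ≤ ω p r) ∧ (∀ p, ∑ r, ω p r = μ p) ∧ (∀ r, ∑ p, ω p r = ν r)

/-- A transport plan from the system (m, α, μ) to the system (n, β, ν): a coupling ω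
satisfying Σ_p ω_{pr} α_{pq} = Σ_s ω_{qs} (ν_r/ν_s) β_{rs} for all q, r. -/
def IsTransportPlan {m n : ℕ} (α : Fin m → Fin m → ℝ) (μ : Fin m → ℝ)
    (β : Fin n → Fin n → ℝ) (ν : Fin n → ℝ) (ω : Fin m → Fin n → ℝ) : Prop :=
  IsCoupling μ ν ω ∧
    ∀ (q : Fin m) (r : Fin n), ∑ p, ω p r * α p q = ∑ s, ω q s * (ν r / ν s * β r s)

/-- The quadratic transport cost of a coupling ω relative to the coordinates k and l. -/
def transportCost {d m n : ℕ} (k : Fin d → Fin m → ℝ) (l : Fin d → Fin n → ℝ)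
    (ω : Fin m → Fin n → ℝ) : ℝ :=
  ∑ i, ∑ p, ∑ r, ω p r * (k i p - l i r) ^ 2

/-- The Wasserstein distance from (m, α, μ) with coordinates k to (n, β, ν) with
coordinates l. -/
noncomputable def Wdist {d m n : ℕ} (α : Fin m → Fin m → ℝ) (μ : Fin m → ℝ)
    (β : Fin n → Fin n → ℝ) (ν : Fin n → ℝ)
    (k : Fin d → Fin m → ℝ) (l : Fin d → Fin n → ℝ) : ℝ :=
  sInf {x | ∃ ω, IsTransportPlan α μ β ν ω ∧ x = Real.sqrt (transportCost k l ω)}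

/-!
A coupling `ω` is a transport plan exactly when it intertwines `α` with the time reversal of `β`:
`∑ p, ω p r * α p q = ∑ s, ω q s * timeReversal β ν s r`. Time reversal is an involution, so
exchanging the two sides of this equation exhibits `ωᵀ` as a transport plan from the reversed second
system to the reversed first one. Detailed balance says that a system is its own time reversal.
-/

section TimeReversal

variable {ι K : Type*} [Field K]

/-- The time reversal of the transition matrix `α` with respect to the weights `μ`: for an invariant
distribution `μ`, the transition matrix of the stationary chain run backwards. Rows with `μ p = 0`
are set to zero, which no coupling with marginal `μ` sees, as its own row `p` vanishes. -/
def timeReversal (α : ι → ι → K) (μ : ι → K) (p q : ι) : K :=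
  μ q / μ p * α q p

theorem timeReversal_timeReversal {μ : ι → K} (hμ : ∀ p, μ p ≠ 0) (α : ι → ι → K) :
    timeReversal (timeReversal α μ) μ = α := by
  funext p q
  have hp := hμ p
  have hq := hμ q
  simp only [timeReversal]
  field_simp

theorem timeReversal_eq_self_iff {α : ι → ι → K} {μ : ι → K} (hμ : ∀ p, μ p ≠ 0) :
    timeReversal α μ = α ↔ ∀ p q, μ p * α p q = μ q * α q p := by
  have entry (p q : ι) : timeReversal α μ p q = α p q ↔ μ p * α p q = μ q * α q p := by
    rw [timeReversal, div_mul_eq_mul_div, div_eq_iff (hμ p), mul_comm (α p q), eq_comm]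
  simp only [funext_iff, entry]

end TimeReversal

section TransportPlan

variable {m n : ℕ} {α : Fin m → Fin m → ℝ} {μ : Fin m → ℝ} {β : Fin n → Fin n → ℝ} {ν : Fin n → ℝ}
  {ω : Fin m → Fin n → ℝ}

theorem isCoupling_transpose_iff : IsCoupling ν μ (fun r p => ω p r) ↔ IsCoupling μ ν ω :=
  and_congr forall_comm and_comm

theorem isTransportPlan_iff_timeReversal :
    IsTransportPlan α μ β ν ω ↔
      IsCoupling μ ν ω ∧ ∀ q r, ∑ p, ω p r * α p q = ∑ s, ω q s * timeReversal β ν s r :=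
  Iff.rfl

theorem stmt_6_general (hμ : ∀ p, μ p ≠ 0) :
    IsTransportPlan α μ β ν ω ↔
      IsTransportPlan (timeReversal β ν) ν (timeReversal α μ) μ (fun r p => ω p r) := by
  rw [isTransportPlan_iff_timeReversal, isTransportPlan_iff_timeReversal,
    timeReversal_timeReversal hμ, isCoupling_transpose_iff, forall_comm]
  exact and_congr_right' (forall₂_congr fun _ _ => eq_comm)

end TransportPlan

/-- If both classical systems satisfy detailed balance, then a coupling ω
is a transport plan from (m, α, μ) to (n, β, ν) iff its transpose is a transport plan
from (n, β, ν) to (m, α, μ). -/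
theorem stmt_6 {m n : ℕ} (α : Fin m → Fin m → ℝ) (μ : Fin m → ℝ)
    (β : Fin n → Fin n → ℝ) (ν : Fin n → ℝ)
    (hA : IsClassicalSystem α μ) (hB : IsClassicalSystem β ν)
    (hdbA : ∀ p q, μ p * α p q = μ q * α q p)
    (hdbB : ∀ r s, ν r * β r s = ν s * β s r)
    (ω : Fin m → Fin n → ℝ) (hω : IsCoupling μ ν ω) :
    IsTransportPlan α μ β ν ω ↔ IsTransportPlan β ν α μ (fun r p => ω p r) := by
  have hμ : ∀ p, μ p ≠ 0 := fun p => (hA.2.2.1 p).ne'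
  have hν : ∀ r, ν r ≠ 0 := fun r => (hB.2.2.1 r).ne'
  rw [stmt_6_general hμ, (timeReversal_eq_self_iff hμ).2 hdbA, (timeReversal_eq_self_iff hν).2 hdbB]
end

section
/- In the 4-point/2-point example, there exists a transport plan ψ from (2, β, ν) to (4, α, μ) with cost I(ψ) = ψ_{12} + ψ_{14} + ψ_{21} + ψ_{23} = 0 if and only if ν_1 = μ_1 + μ_3 and α_{12} + α_{14} = r, α_{32} + α_{34} = r, α_{21} + α_{23} = s, α_{41} + α_{43} = s; moreover in that case the zero-cost transport plan is unique, namely ψ_{11} = μ_1, ψ_{13} = μ_3, ψ_{22} = μ_2, ψ_{24} = μ_4 and all other entries of ψ equal 0. -/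
/-!
Take the points of the first system to have distinct coordinates, and give each point `r` of the
second system the coordinate of a point `f r` of the first. A coupling of cost zero can then only
carry mass on the graph of `f`, so its column sums force it to be the one with entries `μ r` at
`(f r, r)`. For this coupling the marginal condition says that `ν` is the image of `μ` under `f`,
and the balance equations, after cancelling `μ r`, say that the sums of `α` over the fibres of `f`
give `β`. The 4-point/2-point example is the case of `f = ![0, 1, 0, 1]`.
-/

section Lumping

variable {d m n : ℕ}

/-- The matrix with entry `μ r` at `(f r, r)` and zeros elsewhere. It is the joint law of
`(f R, R)` when `R` has law `μ`. -/
def graphCoupling (f : Fin n → Fin m) (μ : Fin n → ℝ) (p : Fin m) (r : Fin n) : ℝ :=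
  if f r = p then μ r else 0

/-- `f` lumps the chain `(n, α, μ)` onto `(m, β, ν)`, as in strong lumpability of Markov chains:
`ν` is the image of `μ`, and from each state `r` the probability of entering the fibre over `q`
is `β (f r) q`. -/
def IsLumping (f : Fin n → Fin m) (β : Fin m → Fin m → ℝ) (ν : Fin m → ℝ)
    (α : Fin n → Fin n → ℝ) (μ : Fin n → ℝ) : Prop :=
  (∀ p, ν p = ∑ r with f r = p, μ r) ∧ ∀ r q, ∑ s with f s = q, α r s = β (f r) q

variable {β : Fin m → Fin m → ℝ} {ν : Fin m → ℝ} {α : Fin n → Fin n → ℝ} {μ : Fin n → ℝ}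
  {ω : Fin m → Fin n → ℝ} {f : Fin n → Fin m}

theorem transportCost_eq_zero_iff {k : Fin d → Fin m → ℝ} {l : Fin d → Fin n → ℝ}
    (hω : ∀ p r, 0 ≤ ω p r) :
    transportCost k l ω = 0 ↔ ∀ p r, ω p r ≠ 0 → ∀ i, k i p = l i r := by
  have term_nonneg i p r : 0 ≤ ω p r * (k i p - l i r) ^ 2 := mul_nonneg (hω p r) (sq_nonneg _)
  have sum_nonneg i p : 0 ≤ ∑ r, ω p r * (k i p - l i r) ^ 2 :=
    Finset.sum_nonneg fun r _ => term_nonneg i p r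
  have cost_eq_zero_iff : transportCost k l ω = 0 ↔
      ∀ i p r, ω p r * (k i p - l i r) ^ 2 = 0 := by
    simp only [transportCost, Fintype.sum_eq_zero_iff_of_nonneg, Pi.le_def, Pi.zero_apply,
      term_nonneg, sum_nonneg, Finset.sum_nonneg, funext_iff, implies_true]
  simp only [cost_eq_zero_iff, mul_eq_zero, sq_eq_zero_iff, sub_eq_zero, or_iff_not_imp_left]
  exact ⟨fun h p r hpr i => h i p r hpr, fun h i p r hpr => h p r hpr i⟩

theorem transportCost_comp_eq_zero_iff {k : Fin d → Fin m → ℝ}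
    (hk : Function.Injective fun p i => k i p) (hω : ∀ p r, 0 ≤ ω p r) :
    transportCost k (fun i r => k i (f r)) ω = 0 ↔ ∀ p r, f r ≠ p → ω p r = 0 := by
  have coords_eq_iff p r : (∀ i, k i p = k i (f r)) ↔ f r = p := by
    rw [← funext_iff, eq_comm (a := f r)]
    exact hk.eq_iff
  simp only [transportCost_eq_zero_iff hω, coords_eq_iff, not_imp_comm, ne_eq]

theorem sum_fst_graphCoupling_mul (g : Fin m → ℝ) (r : Fin n) :
    ∑ p, graphCoupling f μ p r * g p = μ r * g (f r) := by
  simp [graphCoupling, ite_mul]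

theorem sum_snd_graphCoupling_mul (p : Fin m) (g : Fin n → ℝ) :
    ∑ r, graphCoupling f μ p r * g r = ∑ r with f r = p, μ r * g r := by
  simp [graphCoupling, ite_mul, Finset.sum_filter]

theorem eq_graphCoupling_iff :
    ω = graphCoupling f μ ↔ (∀ r, ∑ p, ω p r = μ r) ∧ ∀ p r, f r ≠ p → ω p r = 0 := by
  constructor
  · rintro rfl
    exact ⟨fun r => by simpa using sum_fst_graphCoupling_mul (fun _ => 1) r,
      fun p r hp => if_neg hp⟩
  · rintro ⟨column_sum, off_graph⟩
    ext p r
    by_cases hp : f r = p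
    · subst hp
      rw [graphCoupling, if_pos rfl, ← column_sum r]
      exact (Fintype.sum_eq_single _ fun q hq => off_graph q r hq.symm).symm
    · rw [off_graph p r hp, graphCoupling, if_neg hp]

theorem isCoupling_graphCoupling_iff (hμ : ∀ r, 0 ≤ μ r) :
    IsCoupling ν μ (graphCoupling f μ) ↔ ∀ p, ν p = ∑ r with f r = p, μ r := by
  have entry_nonneg p r : 0 ≤ graphCoupling f μ p r := ite_nonneg (hμ r) le_rfl
  have row_sum p : ∑ r, graphCoupling f μ p r = ∑ r with f r = p, μ r := by
    simpa using sum_snd_graphCoupling_mul p fun _ => 1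
  have column_sum r : ∑ p, graphCoupling f μ p r = μ r := (eq_graphCoupling_iff.1 rfl).1 r
  simp only [IsCoupling, entry_nonneg, row_sum, column_sum, implies_true, true_and, and_true,
    eq_comm]

theorem isTransportPlan_graphCoupling_iff (hμ : ∀ r, 0 < μ r) :
    IsTransportPlan β ν α μ (graphCoupling f μ) ↔ IsLumping f β ν α μ := by
  have balance_iff q r :
      (∑ p, graphCoupling f μ p r * β p q =
        ∑ s, graphCoupling f μ q s * (μ r / μ s * α r s)) ↔
      ∑ s with f s = q, α r s = β (f r) q := by
    have cancel s : μ s * (μ r / μ s * α r s) = μ r * α r s := by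
      rw [← mul_assoc, mul_div_cancel₀ _ (hμ s).ne']
    simp only [sum_fst_graphCoupling_mul fun p => β p q, sum_snd_graphCoupling_mul, cancel]
    rw [← Finset.mul_sum, mul_right_inj' (hμ r).ne', eq_comm]
  rw [IsTransportPlan, IsLumping, isCoupling_graphCoupling_iff fun r => (hμ r).le]
  simp only [balance_iff]
  exact and_congr_right' forall_comm

theorem isTransportPlan_and_transportCost_eq_zero_iff {k : Fin d → Fin m → ℝ}
    (hk : Function.Injective fun p i => k i p) (hμ : ∀ r, 0 < μ r) :
    IsTransportPlan β ν α μ ω ∧ transportCost k (fun i r => k i (f r)) ω = 0 ↔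
      IsLumping f β ν α μ ∧ ω = graphCoupling f μ := by
  constructor
  · rintro ⟨hω, cost_eq_zero⟩
    obtain ⟨entry_nonneg, -, column_sum⟩ := hω.1
    obtain rfl : ω = graphCoupling f μ := eq_graphCoupling_iff.2
      ⟨column_sum, (transportCost_comp_eq_zero_iff hk entry_nonneg).1 cost_eq_zero⟩
    exact ⟨(isTransportPlan_graphCoupling_iff hμ).1 hω, rfl⟩
  · rintro ⟨hf, rfl⟩
    have hω := (isTransportPlan_graphCoupling_iff hμ).2 hf
    exact ⟨hω, (transportCost_comp_eq_zero_iff hk hω.1.1).2 (eq_graphCoupling_iff.1 rfl).2⟩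

theorem stmt_13_general {k : Fin d → Fin m → ℝ}
    (hk : Function.Injective fun p i => k i p) (hμ : ∀ r, 0 < μ r) :
    ((∃ ω, IsTransportPlan β ν α μ ω ∧ transportCost k (fun i r => k i (f r)) ω = 0) ↔
      IsLumping f β ν α μ) ∧
    ∀ ω, IsTransportPlan β ν α μ ω → transportCost k (fun i r => k i (f r)) ω = 0 →
      ω = graphCoupling f μ := by
  simp only [← and_imp, isTransportPlan_and_transportCost_eq_zero_iff hk hμ]
  exact ⟨by simp only [exists_and_left, exists_eq, and_true], fun _ => And.right⟩

end Lumping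

section FourPoints

/-- The map from four points to two under which the points `0, 2` lie over `0` and the points
`1, 3` over `1`. -/
def parityMap : Fin 4 → Fin 2 := ![0, 1, 0, 1]

/-- The coordinates `0` and `1` of the two points. With their pullback along `parityMap` they make
the quadratic cost of `ψ` the functional `I(ψ)` of the example. -/
def twoPointCoords : Fin 1 → Fin 2 → ℝ := ![![0, 1]]

theorem twoPointCoords_injective : Function.Injective fun p i => twoPointCoords i p := by
  intro p q h
  have coord_eq : twoPointCoords 0 p = twoPointCoords 0 q := congrFun h 0
  fin_cases p <;> fin_cases q <;> simp_all [twoPointCoords]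

theorem transportCost_parityMap (ψ : Fin 2 → Fin 4 → ℝ) :
    transportCost twoPointCoords (fun i r => twoPointCoords i (parityMap r)) ψ =
      ψ 0 1 + ψ 0 3 + ψ 1 0 + ψ 1 2 := by
  simp [transportCost, twoPointCoords, parityMap, Fin.sum_univ_four, add_assoc]

theorem graphCoupling_parityMap (μ : Fin 4 → ℝ) :
    graphCoupling parityMap μ = ![![μ 0, 0, μ 2, 0], ![0, μ 1, 0, μ 3]] := by
  ext p r
  fin_cases p <;> fin_cases r <;> simp [graphCoupling, parityMap]

theorem sum_parityMap_eq_zero (g : Fin 4 → ℝ) : ∑ r with parityMap r = 0, g r = g 0 + g 2 := by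
  rw [Finset.sum_filter, Fin.sum_univ_four]
  simp [parityMap]

theorem sum_parityMap_eq_one (g : Fin 4 → ℝ) : ∑ r with parityMap r = 1, g r = g 1 + g 3 := by
  rw [Finset.sum_filter, Fin.sum_univ_four]
  simp [parityMap]

-- Only half of the lumping equations remain, as both sides have the same total over the two fibres.
theorem isLumping_parityMap_iff {α : Fin 4 → Fin 4 → ℝ} {μ : Fin 4 → ℝ} {ν : Fin 2 → ℝ}
    {r s : ℝ} (row_sum : ∀ p, ∑ q, α p q = 1) (mass_eq : ν 0 + ν 1 = ∑ p, μ p) :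
    IsLumping parityMap ![![1 - r, r], ![s, 1 - s]] ν α μ ↔
      (ν 0 = μ 0 + μ 2 ∧
        α 0 1 + α 0 3 = r ∧ α 2 1 + α 2 3 = r ∧
        α 1 0 + α 1 2 = s ∧ α 3 0 + α 3 2 = s) := by
  simp only [Fin.sum_univ_four] at row_sum mass_eq
  simp only [IsLumping, Fin.forall_fin_two, sum_parityMap_eq_zero, sum_parityMap_eq_one]
  constructor
  · rintro ⟨⟨hν, -⟩, lumped⟩
    exact ⟨hν, (lumped 0).2, (lumped 2).2, (lumped 1).1, (lumped 3).1⟩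
  · rintro ⟨hν, h0, h2, h1, h3⟩
    refine ⟨⟨hν, by linarith⟩, fun
      | 0 => ⟨?_, h0⟩
      | 1 => ⟨h1, ?_⟩
      | 2 => ⟨?_, h2⟩
      | 3 => ⟨h3, ?_⟩⟩
    · change α 0 0 + α 0 2 = 1 - r
      linarith [row_sum 0]
    · change α 1 1 + α 1 3 = 1 - s
      linarith [row_sum 1]
    · change α 2 0 + α 2 2 = 1 - r
      linarith [row_sum 2]
    · change α 3 1 + α 3 3 = 1 - s
      linarith [row_sum 3]

end FourPoints

/-- In the 4-point/2-point example, a zero-cost transport plan from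
(2, β, ν) to (4, α, μ) exists iff ν_1 = μ_1 + μ_3 and the four row-sum conditions on α
hold; moreover the zero-cost transport plan is then unique. -/
theorem stmt_13 (α : Fin 4 → Fin 4 → ℝ) (μ : Fin 4 → ℝ)
    (hA : IsClassicalSystem α μ)
    (r s : ℝ) (hr0 : 0 ≤ r) (hr1 : r ≤ 1) (hs0 : 0 ≤ s) (hs1 : s ≤ 1)
    (ν : Fin 2 → ℝ) (hν : ∀ i, 0 < ν i) (hνsum : ν 0 + ν 1 = 1)
    (hdb : ν 0 * r = ν 1 * s) :
    ((∃ ψ, IsTransportPlan (![![1 - r, r], ![s, 1 - s]]) ν α μ ψ ∧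
        ψ 0 1 + ψ 0 3 + ψ 1 0 + ψ 1 2 = 0) ↔
      (ν 0 = μ 0 + μ 2 ∧
        α 0 1 + α 0 3 = r ∧ α 2 1 + α 2 3 = r ∧
        α 1 0 + α 1 2 = s ∧ α 3 0 + α 3 2 = s)) ∧
    ∀ ψ, IsTransportPlan (![![1 - r, r], ![s, 1 - s]]) ν α μ ψ →
      ψ 0 1 + ψ 0 3 + ψ 1 0 + ψ 1 2 = 0 →
      ψ = ![![μ 0, 0, μ 2, 0], ![0, μ 1, 0, μ 3]] := by
  rw [← isLumping_parityMap_iff hA.2.1 (hνsum.trans hA.2.2.2.1.symm)]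
  simpa only [transportCost_parityMap, graphCoupling_parityMap] using
    stmt_13_general (f := parityMap) twoPointCoords_injective hA.2.2.1
end
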